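/- arXiv:2002.00050 — 5 statements merged into one kernel-verified Lean document; each statement's English description precedes it below -/
import Mathlib

section
/- Let n and k be positive integers with gcd(k, n) = 1, and let F : F_{2^n} → F_{2^n} be the Kasami function F(x) = x^{2^{2k} - 2^k + 1}. Then F is almost perfect nonlinear (APN): for every a ∈ F_{2^n} with a ≠ 0 and every b ∈ F_{2^n}, the equation F(x) + F(x + a) = b has at most 2 solutions x in F_{2^n}. -/
theorem kasami_core {F : Type*} [Field F] [CharP F 2] (φ : F →+* F)
    (hφ : ∀ x, φ x = x → x = 0 ∨ x = 1) (x y c : F) (hc : c ≠ 0)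
    (hx : φ x + x ≠ 0) (hy : φ y + y ≠ 0)
    (ex : c * φ (x ^ 2 + x) = (φ x + x) * φ (φ x + x))
    (ey : c * φ (y ^ 2 + y) = (φ y + y) * φ (φ y + y)) : y = x ∨ y = x + 1 := by
  have h2 : (2 : F) = 0 := CharTwo.two_eq_zero
  have hinj : Function.Injective φ := φ.injective
  have key : ∀ s : F, s ^ 2 + s = 0 → s = 0 ∨ s = 1 := by
    intro s hs
    have : s * (s - 1) = 0 := by linear_combination hs - s * h2
    rcases mul_eq_zero.1 this with h | h
    · exact Or.inl h
    · exact Or.inr (sub_eq_zero.1 h)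
  have hC : φ c ≠ 0 := by simpa using hc
  -- affine equation
  have aff : ∀ x : F, φ x + x ≠ 0 → c * φ (x ^ 2 + x) = (φ x + x) * φ (φ x + x) →
      c * φ (φ (φ x + x)) + φ c * (φ x + x) + c * φ c * φ (φ x + x) = c * φ c := by
    intro x hx ex
    have hu1 : φ (φ x + x) ≠ 0 := fun h => hx ((map_eq_zero φ).1 h)
    have e2 := congrArg φ ex
    apply mul_left_cancel₀ hu1
    simp only [map_mul, map_add, map_pow] at *
    generalize φ (φ (φ x)) = x3 at *
    generalize φ (φ x) = x2 at *
    generalize φ x = x1 at *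
    generalize φ c = C at *
    grind
  by_cases hw : φ (x + y) + (x + y) = 0
  · have : φ (x + y) = x + y := by grind
    rcases hφ _ this with h | h
    · left; grind
    · right; grind
  exfalso
  have ax := aff x hx ex
  have ay := aff y hy ey
  obtain ⟨z, hz⟩ : ∃ z, z = x + y := ⟨_, rfl⟩
  obtain ⟨u, hu⟩ : ∃ u, u = φ x + x := ⟨_, rfl⟩
  obtain ⟨w, hwd⟩ : ∃ w, w = φ z + z := ⟨_, rfl⟩
  have hyz : y = x + z := by grind
  have huy : φ y + y = u + w := by rw [hyz, map_add]; grind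
  rw [← hz, ← hwd] at hw
  rw [← hu] at ax ex hx
  rw [huy] at ay ey hy
  -- B
  obtain ⟨B, hB⟩ : ∃ B, c * B = u * φ w + φ u * w := ⟨(u * φ w + φ u * w) / c, by field_simp⟩
  have hB1 : φ B + B = φ w := by
    have hB' := congrArg φ hB
    apply mul_left_cancel₀ (mul_ne_zero hc hC)
    simp only [map_mul, map_add] at *
    linear_combination (norm := skip) c * hB' + φ c * hB + φ u * ay + (φ w + φ u) * ax
    grind
  have hBz : φ (B + φ z) = B + φ z := by
    rw [hwd] at hB1
    simp only [map_add] at *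
    grind
  have htau : c * φ (z ^ 2 + z) = w * φ w + c * B := by
    rw [hyz] at ey
    simp only [map_add, map_pow, map_mul] at *
    grind
  obtain ⟨Z, hBZ, hwZ, hZ2⟩ : ∃ Z, B = φ Z ∧ w = φ Z + Z ∧ c * φ Z ^ 2 = w * φ w := by
    rcases hφ _ hBz with h | h
    · refine ⟨z, by grind, hwd, ?_⟩
      simp only [map_add, map_pow] at htau
      grind
    · refine ⟨z + 1, by rw [map_add, map_one]; grind, by rw [map_add, map_one]; grind, ?_⟩
      simp only [map_add, map_pow, map_one] at *
      grind
  have hw1 : φ w ≠ 0 := by simpa using hw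
  have hZ1 : φ Z ≠ 0 := by
    intro h
    rw [h] at hZ2
    exact mul_ne_zero hw hw1 (by rw [← hZ2]; ring)
  have hZ0 : Z ≠ 0 := by
    rintro rfl; simp at hZ1
  obtain ⟨r, hr⟩ : ∃ r, u = r * w := ⟨u / w, by field_simp⟩
  have hr1 : (r + φ r) * φ Z = 1 := by
    have : (w * φ w) * ((r + φ r) * φ Z) = (w * φ w) * 1 := by
      rw [hr, map_mul, hBZ] at hB
      linear_combination hZ2 - φ Z * hB
    exact mul_left_cancel₀ (mul_ne_zero hw hw1) this
  have ht : φ x ^ 2 + φ x = r * φ r * φ Z ^ 2 := by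
    apply mul_left_cancel₀ hc
    rw [hr] at ex
    simp only [map_add, map_pow, map_mul] at ex
    linear_combination ex - r * φ r * hZ2
  have hrne : φ r ≠ r := by
    intro h
    rw [h] at hr1
    have : (r + r) = 0 := CharTwo.add_self_eq_zero r
    rw [this] at hr1; simp at hr1
  have hfac : (φ x - r * φ Z) * (φ x - φ r * φ Z) = 0 := by
    linear_combination ht - φ x * hr1 + (r * φ Z ^ 2 * φ r - φ x) * h2
  have hrel : r * (φ Z + Z) = φ x + x := by rw [← hwZ, ← hr, hu]
  rcases mul_eq_zero.1 hfac with h | h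
  · have e1 : x = r * Z := by linear_combination h - hrel + (r * φ Z - φ x) * h2
    have e2 := congrArg φ e1
    rw [map_mul] at e2
    exact hrne (mul_right_cancel₀ hZ1 (by linear_combination h - e2))
  · have e1 : x = r * Z := hinj (by rw [map_mul]; linear_combination h)
    exact hrne (mul_right_cancel₀ hZ1 (by linear_combination -h - hrel + e1 + (r * Z - x) * h2))

/-- The Kasami function `F(x) = x^(2^(2k) - 2^k + 1)` on `F_{2^n}`,
with `gcd(k, n) = 1`, is almost perfect nonlinear (APN): for every nonzero `a`
and every `b`, the equation `F(x) + F(x + a) = b` has at most 2 solutions. -/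
theorem kasami_is_APN (n k : ℕ) (hn : 0 < n) (hk : 0 < k) (hgcd : Nat.gcd k n = 1)
    (F : Type*) [Field F] [Fintype F] (hcard : Fintype.card F = 2 ^ n)
    (a b : F) (ha : a ≠ 0) :
    {x : F | x ^ (2 ^ (2 * k) - 2 ^ k + 1) + (x + a) ^ (2 ^ (2 * k) - 2 ^ k + 1) = b}.ncard ≤ 2 := by
  haveI : Fact (Nat.Prime 2) := ⟨Nat.prime_two⟩
  haveI : CharP F 2 := charP_of_card_eq_prime_pow hcard
  have h2 : (2 : F) = 0 := CharTwo.two_eq_zero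
  obtain ⟨φ, hφd⟩ : ∃ φ : F →+* F, ∀ x, φ x = x ^ 2 ^ k :=
    ⟨iterateFrobenius F 2 k, fun x => iterateFrobenius_def 2 k x⟩
  have hφ : ∀ x, φ x = x → x = 0 ∨ x = 1 := by
    intro x hx
    by_cases h0 : x = 0
    · exact Or.inl h0
    right
    have aux : ∀ m : ℕ, x ^ 2 ^ m = x → x ^ (2 ^ m - 1) = 1 := by
      intro m hm
      apply mul_right_cancel₀ h0
      rw [← pow_succ, Nat.sub_add_cancel Nat.one_le_two_pow, hm, one_mul]
    have h1 := aux k (by rw [← hφd, hx])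
    have h3 := aux n (by rw [← hcard, FiniteField.pow_card])
    have h4 := pow_gcd_eq_one.2 ⟨h1, h3⟩
    rw [Nat.pow_sub_one_gcd_pow_sub_one, hgcd] at h4
    simpa using h4
  obtain ⟨d, hd⟩ : ∃ d, d = 2 ^ (2 * k) - 2 ^ k + 1 := ⟨_, rfl⟩
  rw [← hd]
  have hd0 : d ≠ 0 := by omega
  have hdq : d + 2 ^ k = 2 ^ k * 2 ^ k + 1 := by
    have : 2 ^ k ≤ 2 ^ (2 * k) := Nat.pow_le_pow_right (by norm_num) (by omega)
    have h' : 2 ^ (2 * k) = 2 ^ k * 2 ^ k := by rw [two_mul, pow_add]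
    omega
  have hpow : ∀ x : F, x ^ d * φ x = φ (φ x) * x := by
    intro x
    rw [hφd (φ x), hφd x, ← pow_mul, ← pow_add, hdq, pow_succ]
  have hD : ∀ x : F, (x ^ d + (x + 1) ^ d + 1) * φ (x ^ 2 + x) = (φ x + x) * φ (φ x + x) := by
    intro x
    have e1 := hpow x
    have e2 := hpow (x + 1)
    simp only [map_add, map_pow, map_one] at *
    generalize (x + 1) ^ d = P at *
    generalize x ^ d = Q at *
    generalize φ (φ x) = x2 at *
    generalize φ x = x1 at *
    grind
  have hz : ∀ x : F, φ x + x = 0 → x = 0 ∨ x = 1 := fun x h => hφ x (by grind)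
  have h11 : (1 : F) + 1 = 0 := CharTwo.add_self_eq_zero 1
  have hD1 : ∀ x : F, φ x + x = 0 → x ^ d + (x + 1) ^ d + 1 = 0 := by
    intro x h
    rcases hz x h with rfl | rfl
    · simp [hd0, h11]
    · simp [hd0, h11]
  have main : ∀ x y : F, x ^ d + (x + 1) ^ d = y ^ d + (y + 1) ^ d → y = x ∨ y = x + 1 := by
    intro x y h
    by_cases hc : x ^ d + (x + 1) ^ d + 1 = 0
    · have f : ∀ s : F, s ^ d + (s + 1) ^ d + 1 = 0 → s = 0 ∨ s = 1 := by
        intro s hs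
        have := hD s
        rw [hs, zero_mul] at this
        rcases mul_eq_zero.1 this.symm with h | h
        · exact hz s h
        · exact hz s ((map_eq_zero φ).1 h)
      rcases f x hc with rfl | rfl <;> rcases f y (by rw [← h]; exact hc) with rfl | rfl <;>
        simp [h11]
    · have ey := hD y
      rw [← h] at ey
      exact kasami_core φ hφ x y _ hc (fun h' => hc (hD1 x h'))
        (fun h' => hc (by rw [h]; exact hD1 y h')) (hD x) ey
  have main2 : ∀ x y : F, x ^ d + (x + a) ^ d = y ^ d + (y + a) ^ d → y = x ∨ y = x + a := by
    intro x y h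
    have sc : ∀ s : F, s ^ d + (s + a) ^ d = a ^ d * ((s / a) ^ d + (s / a + 1) ^ d) := by
      intro s
      rw [mul_add, ← mul_pow, ← mul_pow]
      congr 2 <;> field_simp
    rw [sc x, sc y] at h
    rcases main _ _ (mul_left_cancel₀ (pow_ne_zero d ha) h) with h | h
    · left; field_simp at h; exact h
    · right; field_simp at h; exact h
  rcases Set.eq_empty_or_nonempty {x : F | x ^ d + (x + a) ^ d = b} with h | ⟨x, hx⟩
  · rw [h]; simp
  · have hs : {x : F | x ^ d + (x + a) ^ d = b} ⊆ {x, x + a} := by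
      intro y hy
      have hx' : x ^ d + (x + a) ^ d = b := hx
      have hy' : y ^ d + (y + a) ^ d = b := hy
      simpa using main2 x y (hx'.trans hy'.symm)
    exact (Set.ncard_le_ncard hs (Set.toFinite _)).trans ((Set.ncard_insert_le _ _).trans (by simp))
end

section
/- Let n and k be positive integers with gcd(n, k) = 1 and let q = 2^k. If for some a ∈ F_{2^n} the equation x^{q+1} + x + a = 0 has exactly three solutions in F_{2^n}, then there exists u ∈ F_{2^n} with u ∉ F_4 such that a = (u + u^q)^{q^2+1} / (u + u^{q^2})^{q+1}. -/
/-- For `gcd(n,k) = 1`, `q = 2^k`, if `x^(q+1) + x + a = 0` has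
exactly three solutions in `F_{2^n}`, then there is `u ∉ F_4` (i.e. `u^4 ≠ u`)
with `a = (u + u^q)^(q^2+1) / (u + u^(q^2))^(q+1)`. -/
theorem three_solutions_param (n k : ℕ) (hn : 0 < n) (hk : 0 < k)
    (hgcd : Nat.gcd n k = 1) (q : ℕ) (hq : q = 2 ^ k)
    (F : Type*) [Field F] [Fintype F] (hcard : Fintype.card F = 2 ^ n)
    (a : F) (h3 : {x : F | x ^ (q + 1) + x + a = 0}.ncard = 3) :
    ∃ u : F, u ^ 4 ≠ u ∧
      a = (u + u ^ q) ^ (q ^ 2 + 1) / (u + u ^ (q ^ 2)) ^ (q + 1) := by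
  have : Fact (Nat.Prime 2) := ⟨Nat.prime_two⟩
  have : CharP F 2 := charP_of_card_eq_prime_pow hcard
  have h2 : ∀ z : F, z + z = 0 := fun z => CharTwo.add_self_eq_zero z
  have hadd : ∀ x y : F, (x + y) ^ q = x ^ q + y ^ q := by
    intro x y; rw [hq]; exact add_pow_char_pow x y 2 k
  have hinj : Function.Injective (fun x : F => x ^ q) := by
    intro x y hxy
    simp only [hq] at hxy
    exact (iterateFrobenius_inj F 2 k) (by simpa [iterateFrobenius_def] using hxy)
  have hsurj : Function.Surjective (fun x : F => x ^ q) := Finite.surjective_of_injective hinj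
  have hq0 : 0 < q := by rw [hq]; positivity
  -- two distinct nonzero roots
  obtain ⟨x, hx0, y, hy0, hxy, hx, hy⟩ : ∃ x : F, x ≠ 0 ∧ ∃ y : F, y ≠ 0 ∧ x ≠ y ∧
      x ^ (q + 1) + x + a = 0 ∧ y ^ (q + 1) + y + a = 0 := by
    obtain ⟨r, s, t, hrs, hrt, hst, h⟩ := Set.ncard_eq_three.mp h3
    have hr : r ^ (q + 1) + r + a = 0 := by
      have : r ∈ {x : F | x ^ (q + 1) + x + a = 0} := by rw [h]; simp
      exact this
    have hs : s ^ (q + 1) + s + a = 0 := by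
      have : s ∈ {x : F | x ^ (q + 1) + x + a = 0} := by rw [h]; simp
      exact this
    have ht : t ^ (q + 1) + t + a = 0 := by
      have : t ∈ {x : F | x ^ (q + 1) + x + a = 0} := by rw [h]; simp
      exact this
    by_cases r0 : r = 0
    · subst r0
      exact ⟨s, hrs.symm, t, hrt.symm, hst, hs, ht⟩
    · by_cases s0 : s = 0
      · subst s0
        exact ⟨r, r0, t, hst.symm, hrt, hr, ht⟩
      · exact ⟨r, r0, s, s0, hrs, hr, hs⟩
  have hcop : (Nat.card Fˣ).Coprime (q - 1) := by
    classical
    rw [Nat.card_eq_fintype_card, Fintype.card_units, hcard, hq, Nat.Coprime,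
      Nat.pow_sub_one_gcd_pow_sub_one, hgcd]
    norm_num
  obtain ⟨v, hv⟩ := (powCoprime hcop).surjective (Units.mk0 y hy0 / Units.mk0 x hx0)
  have hv' : (v : F) ^ (q - 1) = y / x := by
    have := congrArg (fun w : Fˣ => (w : F)) hv
    simpa using this
  obtain ⟨u, hu⟩ := hsurj (v : F)
  have hu : u ^ q = (v : F) := hu
  have hB0 : u ^ q ≠ 0 := by rw [hu]; exact v.ne_zero
  have hC0 : (u ^ q) ^ q ≠ 0 := pow_ne_zero _ hB0
  have hBC : y * u ^ q = x * (u ^ q) ^ q := by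
    have e : (u ^ q) ^ q = (u ^ q) ^ (q - 1) * u ^ q := by
      rw [← pow_succ, Nat.sub_add_cancel hq0]
    rw [e, hu, hv']
    field_simp
  have hCD : y ^ q * (u ^ q) ^ q = x ^ q * ((u ^ q) ^ q) ^ q := by
    rw [← mul_pow, ← mul_pow, hBC]
  have hlin : x ^ q * (u ^ q + ((u ^ q) ^ q) ^ q) = u ^ q + (u ^ q) ^ q := by
    rw [pow_succ] at hx hy
    apply mul_left_cancel₀ (mul_ne_zero hx0 hC0)
    generalize u ^ q = B at *
    generalize B ^ q = C at *
    generalize C ^ q = D at *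
    generalize x ^ q = X at *
    generalize y ^ q = Y at *
    linear_combination B * C * hx - B * C * hy + (C + Y * C) * hBC + x * C * hCD
      + h2 (x * C * X * D) - h2 (x * B * C) 
  have hl : x * (u + (u ^ q) ^ q) = u + u ^ q := by
    apply hinj
    simp only [mul_pow, hadd]
    exact hlin
  have hne : u + u ^ q ≠ 0 := by
    intro h
    have e : u ^ q = u := (CharTwo.add_eq_zero.mp h).symm
    rw [e, e] at hBC
    rw [e] at hB0
    exact hxy (mul_right_cancel₀ hB0 hBC).symm
  have hd : u + (u ^ q) ^ q ≠ 0 := by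
    intro h; rw [h, mul_zero] at hl; exact hne hl.symm
  refine ⟨u, ?_, ?_⟩
  · intro h4
    apply hd
    have : ∀ m : ℕ, u ^ (4 ^ m) = u := by
      intro m
      induction m with
      | zero => simp
      | succ m ih => rw [pow_succ, pow_mul, ih, h4]
    rw [← pow_mul, hq, ← mul_pow, show 2 * 2 = 4 from rfl, this k]
    exact h2 u
  · have hd' : u ^ q + ((u ^ q) ^ q) ^ q ≠ 0 := by
      intro h; apply hd; apply hinj
      simp only [hadd, h, zero_pow hq0.ne']
    have e1 : u ^ (q ^ 2) = (u ^ q) ^ q := by rw [sq, pow_mul]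
    have e2 : (u + u ^ q) ^ (q ^ 2 + 1)
        = ((u ^ q) ^ q + ((u ^ q) ^ q) ^ q) * (u + u ^ q) := by
      rw [pow_succ, sq, pow_mul, hadd, hadd]
    have e3 : (u + (u ^ q) ^ q) ^ (q + 1)
        = (u ^ q + ((u ^ q) ^ q) ^ q) * (u + (u ^ q) ^ q) := by
      rw [pow_succ, hadd]
    rw [e1, e2, e3, eq_div_iff (mul_ne_zero hd' hd)]
    rw [pow_succ] at hx
    generalize u ^ q = B at *
    generalize B ^ q = C at *
    generalize C ^ q = D at *
    generalize x ^ q = X at *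
    have ha : a = (X + 1) * x := by
      linear_combination hx - h2 (X * x + x)
    have hX : (X + 1) * (B + D) = C + D := by
      linear_combination hlin + h2 B
    rw [ha, ← hX, ← hl]
    ring
end

section
/- Let n and k be positive integers with gcd(n, k) = 1 and k odd, let q = 2^k, and let T_k(X) = X + X^2 + X^4 + ⋯ + X^{2^{k-1}} (the sum of X^{2^i} for 0 ≤ i ≤ k−1). Then the Müller–Cohen–Matthews map f : F_{2^n} → F_{2^n} defined by f(x) = T_k(x)^{q+1} / x^q for x ≠ 0 and f(0) = 0 is a bijection of F_{2^n}. -/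
theorem MCM_core {F : Type*} [Field F] [CharP F 2] (q : ℕ) (T : F → F)
    (hFr : ∀ x y : F, (x + y) ^ q = x ^ q + y ^ q)
    (hadd : ∀ x y, T (x + y) = T x + T y)
    (hsq : ∀ x, T (x ^ 2) = T x ^ 2)
    (hT : ∀ x, T x ^ 2 + T x = x ^ q + x)
    (hker : ∀ x, T x = 0 → x = 0)
    (c u v : F) (hc : c ≠ 0) (hu : u ≠ 0) (huv : u + v ≠ 0)
    (h1 : T (c * u ^ (q + 1)) = c * u ^ q)
    (h2 : T (c * (u + v) ^ (q + 1)) = c * (u + v) ^ q) : v = 0 := by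
  have two : (2 : F) = 0 := CharTwo.two_eq_zero
  have E : ∀ w : F, w ≠ 0 → T (c * w ^ (q + 1)) = c * w ^ q →
      c ^ q * (w ^ q) ^ q + c ^ 2 * w ^ q + c * w + c = 0 := by
    intro w hw h
    have h3 := hT (c * w ^ (q + 1))
    rw [h] at h3
    simp only [mul_pow, pow_succ w q] at h3
    have hwq : w ^ q ≠ 0 := pow_ne_zero _ hw
    apply mul_left_cancel₀ hwq
    linear_combination (-1 : F) * h3 + (c ^ 2 * (w ^ q) ^ 2 + c * w ^ q) * two
  have e1 := E u hu h1
  have e2 := E (u + v) huv h2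
  rw [hFr u v, hFr (u ^ q)] at e2
  have H : c ^ q * (v ^ q) ^ q + c ^ 2 * v ^ q + c * v = 0 := by
    linear_combination e2 - e1
  obtain ⟨z, hz⟩ : ∃ z, z = c * v ^ (q + 1) := ⟨_, rfl⟩
  obtain ⟨A, hA⟩ : ∃ A, A = c * (u ^ q * v + u * v ^ q) := ⟨_, rfl⟩
  have ht : T z ^ 2 + T z = (c * v ^ q) ^ 2 := by
    rw [hT, hz]
    simp only [mul_pow, pow_succ v q]
    linear_combination v ^ q * H - (c ^ 2 * (v ^ q) ^ 2) * two
  have hAz : T A + T z = c * v ^ q := by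
    have : c * (u + v) ^ (q + 1) = c * u ^ (q + 1) + (A + z) := by
      rw [hA, hz, pow_succ (u + v), hFr]; ring
    rw [this, hadd, hadd, h1, hFr] at h2
    linear_combination h2
  have hTA : T A ^ 2 = T z := by
    linear_combination (T A + T z + c * v ^ q) * hAz - ht - T A * T z * two
  have hA2 : A ^ 2 = z := by
    have h0 : T (A ^ 2 + z) = 0 := by
      rw [hadd, hsq, hTA]; linear_combination T z * two
    have := hker _ h0
    linear_combination this - z * two
  have hAq : A ^ q = A + c * v ^ q := by
    linear_combination hTA + hAz - hT A - A * two
  by_contra hv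
  have hvq : v ^ q ≠ 0 := pow_ne_zero _ hv
  obtain ⟨r, hr⟩ : ∃ r, r = u * A / v := ⟨_, rfl⟩
  have hrv : r * v = u * A := by rw [hr]; field_simp
  have hx : c * u ^ (q + 1) = r ^ 2 + r := by
    apply mul_left_cancel₀ (pow_ne_zero 2 hv)
    have : z = c * (v ^ q * v) := by rw [hz, pow_succ]
    rw [pow_succ u]
    linear_combination (-(r * v + u * A) - v) * hrv - u ^ 2 * hA2 - u ^ 2 * this - u * v * hA
      - c * u ^ 2 * v ^ q * v * two
  have hTr : r ^ q + r = c * u ^ q := by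
    rw [← h1, hx, hadd, hsq, hT]
  have hrq : r ^ q * v ^ q = u ^ q * A ^ q := by
    rw [← mul_pow, hrv, mul_pow]
  have hAA : A * A = 0 := by
    have h5 : A * (u ^ q * v + u * v ^ q) = 0 := by
      linear_combination v ^ q * v * hTr - v * hrq - v ^ q * hrv - u ^ q * v * hAq
    linear_combination A * hA + c * h5
  have hA0 : A = 0 := by simpa using hAA
  have hz0 : z = 0 := by rw [← hA2, hA0]; simp
  rw [hz] at hz0
  exact (mul_ne_zero hc (pow_ne_zero _ hv)) hz0

theorem MCM_fixed {F : Type*} [Field F] [Fintype F] (n k : ℕ)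
    (hgcd : Nat.gcd n k = 1) (hcard : Fintype.card F = 2 ^ n) (x : F) (hx : x ≠ 0)
    (h : x ^ 2 ^ k = x) : x = 1 := by
  have h1 : x ^ (2 ^ n - 1) = 1 := by
    rw [← hcard]; exact FiniteField.pow_card_sub_one_eq_one x hx
  have h2 : x ^ (2 ^ k - 1) = 1 := by
    apply mul_right_cancel₀ hx
    rw [← pow_succ, Nat.sub_add_cancel Nat.one_le_two_pow, h, one_mul]
  have h3 := Nat.dvd_gcd (orderOf_dvd_of_pow_eq_one h1) (orderOf_dvd_of_pow_eq_one h2)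
  rw [Nat.pow_sub_one_gcd_pow_sub_one, hgcd] at h3
  exact orderOf_eq_one_iff.mp (by simpa using h3)


/-- For `gcd(n,k) = 1` with `k` odd and `q = 2^k`, the
Müller–Cohen–Matthews map `f(x) = T_k(x)^(q+1)/x^q` (for `x ≠ 0`, with
`f(0) = 0`), where `T_k(x) = ∑_{i<k} x^(2^i)`, is a bijection of `F_{2^n}`. -/
theorem MCM_bijective (n k : ℕ) (hn : 0 < n) (hk : 0 < k) (hkodd : Odd k)
    (hgcd : Nat.gcd n k = 1) (q : ℕ) (hq : q = 2 ^ k)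
    (F : Type*) [Field F] [Fintype F] [DecidableEq F]
    (hcard : Fintype.card F = 2 ^ n) :
    Function.Bijective (fun x : F =>
      if x = 0 then 0 else (∑ i ∈ Finset.range k, x ^ 2 ^ i) ^ (q + 1) / x ^ q) := by
  classical
  have hchar : CharP F 2 := by
    obtain ⟨p, hp⟩ := CharP.exists F
    have hpp : p.Prime := CharP.char_is_prime F p
    obtain ⟨m, -, hm⟩ := FiniteField.card F p
    have : p ∣ 2 ^ n := by
      rw [← hcard, hm]; exact dvd_pow_self _ m.pos.ne'
    have := (Nat.prime_dvd_prime_iff_eq hpp Nat.prime_two).mp (hpp.dvd_of_dvd_pow this)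
    exact this ▸ hp
  have two : (2 : F) = 0 := CharTwo.two_eq_zero
  have hF2 : ∀ (i : ℕ) (x y : F), (x + y) ^ 2 ^ i = x ^ 2 ^ i + y ^ 2 ^ i :=
    fun i x y => add_pow_char_pow x y 2 i
  obtain ⟨T, hTd⟩ : ∃ T : F → F, T = fun x => ∑ i ∈ Finset.range k, x ^ 2 ^ i := ⟨_, rfl⟩
  have hadd : ∀ x y, T (x + y) = T x + T y := by
    intro x y
    simp only [hTd, hF2, Finset.sum_add_distrib]
  have hsq : ∀ x, T (x ^ 2) = T x ^ 2 := by
    intro x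
    simp only [hTd]
    rw [CharTwo.sum_sq]
    exact Finset.sum_congr rfl fun i _ => by rw [← pow_mul, ← pow_mul, mul_comm]
  have hT : ∀ x, T x ^ 2 + T x = x ^ q + x := by
    intro x
    have h : T (x ^ 2) + x = T x + x ^ q := by
      simp only [hTd, hq]
      rw [← Finset.sum_range_succ (fun i => x ^ 2 ^ i), Finset.sum_range_succ']
      simp only [pow_zero, pow_one]
      congr 1
      exact Finset.sum_congr rfl fun i _ => by rw [← pow_mul, pow_succ, mul_comm]
    rw [← hsq]
    linear_combination h + (T x - x) * two
  have hker : ∀ x, T x = 0 → x = 0 := by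
    intro x hx
    by_contra h0
    have h := hT x
    rw [hx] at h
    have h1 : x = 1 := by
      apply MCM_fixed n k hgcd hcard x h0
      rw [← hq]
      linear_combination -h - x * two
    rw [h1, hTd] at hx
    obtain ⟨m, rfl⟩ := hkodd
    simp [two] at hx
  have hfun : (fun x : F =>
      if x = 0 then 0 else (∑ i ∈ Finset.range k, x ^ 2 ^ i) ^ (q + 1) / x ^ q)
      = fun x => T x ^ (q + 1) / x ^ q := by
    funext x
    split_ifs with h
    · subst h
      have : T 0 = 0 := by simpa using hadd 0 0
      simp [this]
    · rw [hTd]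
  rw [hfun, ← Finite.injective_iff_bijective]
  have hT0 : T 0 = 0 := by simpa using hadd 0 0
  have hz : ∀ x, T x ^ (q + 1) / x ^ q = 0 → x = 0 := by
    intro x hx
    rcases div_eq_zero_iff.mp hx with h | h
    · exact hker x (pow_eq_zero_iff (Nat.succ_ne_zero q) |>.mp h)
    · exact eq_zero_of_pow_eq_zero h
  intro x y hxy
  simp only at hxy
  by_cases hx : x = 0
  · subst hx
    rw [hT0] at hxy
    exact (hz y (by rw [← hxy]; simp)).symm
  by_cases hy : y = 0
  · subst hy
    rw [hT0] at hxy
    exact hz x (by rw [hxy]; simp)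
  have key : ∀ w : F, w ≠ 0 → (T w ^ (q + 1) / w ^ q) * (w / T w) ^ q = T w ∧
      (T w ^ (q + 1) / w ^ q) * (w / T w) ^ (q + 1) = w := by
    intro w hw
    have : T w ≠ 0 := fun h => hw (hker w h)
    constructor
    · rw [div_pow, pow_succ]; field_simp
    · rw [div_pow, pow_succ, pow_succ]; field_simp
  obtain ⟨c, hc⟩ : ∃ c, c = T x ^ (q + 1) / x ^ q := ⟨_, rfl⟩
  have hc0 : c ≠ 0 := fun h => hx (hz x (hc ▸ h))
  obtain ⟨a1, a2⟩ := key x hx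
  obtain ⟨b1, b2⟩ := key y hy
  rw [← hxy] at b1 b2
  rw [← hc] at a1 a2 b1 b2
  have hu : x / T x ≠ 0 := div_ne_zero hx fun h => hx (hker x h)
  have hw : y / T y ≠ 0 := div_ne_zero hy fun h => hy (hker y h)
  have hs : x / T x + (x / T x + y / T y) = y / T y := by
    linear_combination (x / T x) * two
  have hv := MCM_core q T (by intro a b; rw [hq]; exact hF2 k a b) hadd hsq hT hker c
    (x / T x) (x / T x + y / T y) hc0 hu (by rw [hs]; exact hw) (by rw [a2, a1])
    (by rw [hs, b2, b1])
  have he : x / T x = y / T y := by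
    linear_combination hv - (y / T y) * two
  rw [← a2, ← b2, he]
end

section
/- Let n be an even positive integer and k a positive integer with gcd(k, n) = 1, and let F : F_{2^n} → F_{2^n} be the Kasami function F(x) = x^{2^{2k} - 2^k + 1}. Then the map x ↦ F(x) + F(x + 1) is 2-to-1 on F_{2^n}: every b ∈ F_{2^n} has either 0 or exactly 2 preimages under this map. -/
/-- Core injectivity argument, for an automorphism `σ` of a field of characteristic two whose
fixed field is `{0, 1}`. -/
lemma kasami_core_s6 {F : Type*} [Field F] (h2 : (2 : F) = 0) (σ : F →+* F)
    (hs : Function.Surjective σ) (hfix : ∀ a, σ a = a → a = 0 ∨ a = 1)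
    (x₁ x₂ c : F) (hc : c ≠ 0) (hx1 : x₁ ≠ 0) (hx1' : x₁ ≠ 1)
    (hx2 : x₂ ≠ 0) (hx2' : x₂ ≠ 1)
    (h1 : c * σ (x₁ ^ 2 + x₁) = (σ x₁ + x₁) * σ (σ x₁ + x₁))
    (h3 : c * σ (x₂ ^ 2 + x₂) = (σ x₂ + x₂) * σ (σ x₂ + x₂)) :
    x₁ = x₂ ∨ x₁ = x₂ + 1 := by
  have key : ∀ a b : F, a ^ 2 + a = b ^ 2 + b → a = b ∨ a = b + 1 := by
    intro a b h
    have : (a - b) * (a - (b + 1)) = 0 := by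
      linear_combination h + (b ^ 2 - a * b - a + b) * h2
    rcases mul_eq_zero.1 this with h | h
    · exact Or.inl (sub_eq_zero.1 h)
    · exact Or.inr (sub_eq_zero.1 h)
  have inj : Function.Injective σ := σ.injective
  obtain ⟨u, hu⟩ := hs (σ x₁ + x₁)
  obtain ⟨u', hu'⟩ := hs (σ x₂ + x₂)
  obtain ⟨g, hg⟩ := hs c
  have hg0 : g ≠ 0 := by
    rintro rfl
    exact hc (by rw [← hg, map_zero])
  obtain ⟨d, hd⟩ : ∃ d, d * g = 1 := ⟨g⁻¹, inv_mul_cancel₀ hg0⟩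
  have hd0 : d ≠ 0 := left_ne_zero_of_mul_eq_one hd
  have hu0 : u ≠ 0 := by
    rintro rfl
    rw [map_zero] at hu
    rcases hfix x₁ (by linear_combination -hu - x₁ * h2) with h | h
    · exact hx1 h
    · exact hx1' h
  have hu0' : u' ≠ 0 := by
    rintro rfl
    rw [map_zero] at hu'
    rcases hfix x₂ (by linear_combination -hu' - x₂ * h2) with h | h
    · exact hx2 h
    · exact hx2' h
  have t1 : x₁ ^ 2 + x₁ = d * (u * σ u) := by
    have : g * (x₁ ^ 2 + x₁) = u * σ u := by
      apply inj
      rw [map_mul, hg, h1, ← hu, map_mul]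
    linear_combination d * this - (x₁ ^ 2 + x₁) * hd
  have t2 : x₂ ^ 2 + x₂ = d * (u' * σ u') := by
    have : g * (x₂ ^ 2 + x₂) = u' * σ u' := by
      apply inj
      rw [map_mul, hg, h3, ← hu', map_mul]
    linear_combination d * this - (x₂ ^ 2 + x₂) * hd
  by_cases huu : u = u'
  · exact key _ _ (by rw [t1, t2, huu])
  exfalso
  -- the linearized equation
  have lin : ∀ x u : F, σ u = σ x + x → x ^ 2 + x = d * (u * σ u) → u ≠ 0 →
      σ d * σ (σ u) = σ u + 1 + d * u := by
    intro x u hu ht hu0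
    have hσu : σ u ≠ 0 := fun h => hu0 (inj (by rw [h, map_zero]))
    apply mul_left_cancel₀ hσu
    have ht' := congrArg σ ht
    simp only [map_add, map_mul, map_pow] at ht'
    linear_combination -ht' - ht + (σ u + 1 + (σ x + x)) * hu + (σ x ^ 2 + σ x + x ^ 2 + x - d * u * σ u - σ u ^ 2 - σ u + σ x * x) * h2
  have l1 := lin x₁ u hu t1 hu0
  have l2 := lin x₂ u' hu' t2 hu0'
  obtain ⟨v, hv⟩ : ∃ v, v = u + u' := ⟨_, rfl⟩
  have hσv : σ v = σ u + σ u' := by rw [hv, map_add]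
  have hv0 : v ≠ 0 := by
    intro h
    exact huu (by linear_combination h - hv - u' * h2)
  obtain ⟨s, hsdef⟩ : ∃ s, s = d * (u * σ u' + σ u * u') := ⟨_, rfl⟩
  have ss : σ s + s = σ v := by
    have e : σ s = σ d * (σ u * σ (σ u') + σ (σ u) * σ u') := by
      rw [hsdef]; simp only [map_add, map_mul]
    rw [e, hσv]
    linear_combination σ u * l2 + σ u' * l1 + hsdef + (σ u * σ u' + d * (u * σ u' + σ u * u')) * h2
  have hX : x₁ + x₂ + s = 0 ∨ x₁ + x₂ + s = 1 := by
    apply hfix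
    simp only [map_add]
    linear_combination ss + hσv - hu - hu' + (σ u + σ u' - x₁ - x₂ - s) * h2
  have hX2 : (x₁ + x₂) ^ 2 + (x₁ + x₂) = s ^ 2 + s := by
    rcases hX with h | h
    · rw [show x₁ + x₂ = s by linear_combination h - s * h2]
    · rw [show x₁ + x₂ = 1 + s by linear_combination h - s * h2]
      linear_combination (1 + s) * h2
  have hw : d * (v * σ v) = s ^ 2 := by
    rw [hσv, hv]
    linear_combination hX2 - t1 - t2 - hsdef + (s - x₁ * x₂) * h2
  obtain ⟨r, hr⟩ : ∃ r, v * r = u := ⟨u / v, mul_div_cancel₀ u hv0⟩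
  have hσr : σ v * σ r = σ u := by rw [← map_mul, hr]
  have hsr : s = s ^ 2 * (r + σ r) := by
    rw [← hw]
    linear_combination hsdef - d * σ v * hr - d * v * hσr - d * u * hσv - d * σ u * hv - d * u * σ u * h2
  have hs0 : s ≠ 0 := by
    intro h
    have hσv0 : σ v ≠ 0 := fun h => hv0 (inj (by rw [h, map_zero]))
    rw [h] at hw
    exact mul_ne_zero hd0 (mul_ne_zero hv0 hσv0) (by rw [hw]; ring)
  have h1r : s * (r + σ r) = 1 := by
    apply mul_left_cancel₀ hs0
    linear_combination -hsr
  have ht1 : x₁ ^ 2 + x₁ = s ^ 2 * (r * σ r) := by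
    rw [t1, ← hw, ← hσr, ← hr]; ring
  have hz : (s * r) ^ 2 + s * r = x₁ ^ 2 + x₁ := by
    rw [ht1]
    linear_combination -s * r * h1r + s ^ 2 * r ^ 2 * h2
  have hzz : σ (s * r) + s * r = σ u := by
    rw [hu]
    rcases key _ _ hz with h | h
    · rw [h]
    · rw [h, map_add, map_one]; linear_combination h2
  rw [map_mul] at hzz
  have : (1 : F) = 0 := by
    linear_combination hzz - hσr + σ r * (-ss) - h1r + s * σ r * h2
  exact one_ne_zero this

lemma kasami_fix {F : Type*} [Field F] [Fintype F] [CharP F 2] (n k : ℕ)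
    (hgcd : Nat.gcd k n = 1) (hcard : Fintype.card F = 2 ^ n) (a : F)
    (h : a ^ 2 ^ k = a) : a = 0 ∨ a = 1 := by
  have e1 : Function.IsPeriodicPt (frobenius F 2) k a := by
    rw [Function.IsPeriodicPt, Function.IsFixedPt, iterate_frobenius, h]
  have e2 : Function.IsPeriodicPt (frobenius F 2) n a := by
    rw [Function.IsPeriodicPt, Function.IsFixedPt, iterate_frobenius, ← hcard,
      FiniteField.pow_card]
  have e3 := e1.gcd e2
  rw [hgcd] at e3
  have e4 : a ^ 2 = a := by
    simpa [Function.IsPeriodicPt, Function.IsFixedPt, frobenius_def] using e3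
  have : a * (a - 1) = 0 := by linear_combination e4
  rcases mul_eq_zero.1 this with h | h
  · exact Or.inl h
  · exact Or.inr (sub_eq_zero.1 h)

/-- For `n` even, `gcd(k,n) = 1`, and the Kasami function
`F(x) = x^(2^(2k)-2^k+1)` on `F_{2^n}`, the map `x ↦ F(x) + F(x+1)` is 2-to-1:
every `b` has either 0 or exactly 2 preimages. -/
theorem kasami_derivative_two_to_one (n k : ℕ) (hn : 0 < n) (hneven : 2 ∣ n)
    (hk : 0 < k) (hgcd : Nat.gcd k n = 1)
    (F : Type*) [Field F] [Fintype F] (hcard : Fintype.card F = 2 ^ n)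
    (b : F) :
    {x : F | x ^ (2 ^ (2 * k) - 2 ^ k + 1) + (x + 1) ^ (2 ^ (2 * k) - 2 ^ k + 1) = b}.ncard = 0 ∨
    {x : F | x ^ (2 ^ (2 * k) - 2 ^ k + 1) + (x + 1) ^ (2 ^ (2 * k) - 2 ^ k + 1) = b}.ncard = 2 := by
  have : Fact (Nat.Prime 2) := ⟨Nat.prime_two⟩
  have : CharP F 2 := charP_of_card_eq_prime_pow hcard
  have h2 : (2 : F) = 0 := by exact_mod_cast CharP.cast_eq_zero F 2
  set E := 2 ^ (2 * k) - 2 ^ k + 1 with hE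
  have hEpow : ∀ x : F, x ^ E * x ^ 2 ^ k = (x ^ 2 ^ k) ^ 2 ^ k * x := by
    intro x
    rw [← pow_add, ← pow_mul, ← pow_succ]
    congr 1
    have h1 : 2 ^ k ≤ 2 ^ (2 * k) := Nat.pow_le_pow_right (by norm_num) (by omega)
    have h3 : 2 ^ (2 * k) = 2 ^ k * 2 ^ k := by rw [two_mul, pow_add]
    omega
  let σ : F →+* F := iterateFrobenius F 2 k
  have hσ : ∀ x, σ x = x ^ 2 ^ k := fun x => iterateFrobenius_def 2 k x
  have hfix : ∀ a, σ a = a → a = 0 ∨ a = 1 := fun a ha =>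
    kasami_fix n k hgcd hcard a (by rw [← hσ, ha])
  have hsurj : Function.Surjective σ := Finite.surjective_of_injective σ.injective
  have hid : ∀ x : F, (x ^ E + (x + 1) ^ E + 1) * σ (x ^ 2 + x)
      = (σ x + x) * σ (σ x + x) := by
    intro x
    have e1 := hEpow x
    have e2 := hEpow (x + 1)
    rw [← hσ, ← hσ] at e1 e2
    simp only [map_add, map_mul, map_pow, map_one] at e1 e2 ⊢
    linear_combination (σ x + 1) * e1 + σ x * e2 + (σ (σ x) * x * σ x + σ x) * h2
  have hE0 : E ≠ 0 := by omega
  have hsol : ∀ x : F, x ^ E + (x + 1) ^ E = 1 ↔ x = 0 ∨ x = 1 := by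
    intro x
    constructor
    · intro h
      have := hid x
      rw [h, show (1 : F) + 1 = 0 by linear_combination h2, zero_mul] at this
      have h0 : σ x + x = 0 := by
        rcases mul_eq_zero.1 this.symm with h | h
        · exact h
        · exact σ.injective (by rw [h, map_zero])
      exact hfix x (by linear_combination h0 - x * h2)
    · rintro (rfl | rfl)
      · simp [hE0]
      · rw [show (1 : F) + 1 = 0 by linear_combination h2]; simp [hE0]
  rcases Set.eq_empty_or_nonempty {x : F | x ^ E + (x + 1) ^ E = b} with h | ⟨x₀, hx₀⟩
  · left; rw [h, Set.ncard_empty]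
  right
  rw [Set.mem_setOf_eq] at hx₀
  have : {x : F | x ^ E + (x + 1) ^ E = b} = {x₀, x₀ + 1} := by
    ext x
    simp only [Set.mem_setOf_eq, Set.mem_insert_iff, Set.mem_singleton_iff]
    constructor
    · intro hx
      by_cases hb : b = 1
      · subst hb
        rcases (hsol x).1 hx with rfl | rfl <;> rcases (hsol x₀).1 hx₀ with rfl | rfl
        · simp
        · right; linear_combination -h2
        · simp
        · simp
      · have hx1 : ¬ (x = 0 ∨ x = 1) := fun h => hb (by rw [← hx, (hsol x).2 h])
        push Not at hx1
        have hx2 : ¬ (x₀ = 0 ∨ x₀ = 1) := fun h => hb (by rw [← hx₀, (hsol x₀).2 h])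
        push Not at hx2
        refine kasami_core_s6 h2 σ hsurj hfix x x₀ (b + 1) ?_ hx1.1 hx1.2 hx2.1 hx2.2 ?_ ?_
        · intro h
          exact hb (by linear_combination h - h2)
        · rw [← hx]; exact hid x
        · rw [← hx₀]; exact hid x₀
    · rintro (rfl | rfl)
      · exact hx₀
      · rw [show x₀ + 1 + 1 = x₀ by linear_combination h2, add_comm]; exact hx₀
  rw [this]
  apply Set.ncard_pair
  intro h
  exact one_ne_zero (α := F) (by linear_combination -h)
end

section
/- Let n be an odd positive integer and k a positive integer with gcd(k, n) = 1, let q = 2^k, and let s be the multiplicative inverse of q − 1 modulo 2^n − 1 (which exists since gcd(2^k − 1, 2^n − 1) = 1). Then for every c ∈ F_{2^n}, there is at most one element v ∈ F_{2^n} satisfying both Tr(v^{−s}) = 1 and (v + 1)^{q+1} + c·v = 0 (note any such v is nonzero, since v = 0 gives (v+1)^{q+1} + cv = 1 ≠ 0). -/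
/-- For `n` odd, `gcd(k,n) = 1`, `q = 2^k`, and `s` the
multiplicative inverse of `q - 1` modulo `2^n - 1`, for every `c ∈ F_{2^n}`
there is at most one `v` with `Tr(v^{-s}) = 1` and `(v+1)^(q+1) + c·v = 0`,
where `Tr(x) = ∑_{i<n} x^(2^i)` is the absolute trace. -/
theorem at_most_one_solution_with_trace_one (n k : ℕ) (hn : 0 < n) (hnodd : Odd n)
    (hk : 0 < k) (hgcd : Nat.gcd k n = 1) (q : ℕ) (hq : q = 2 ^ k)
    (s : ℕ) (hs : (q - 1) * s ≡ 1 [MOD 2 ^ n - 1])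
    (F : Type*) [Field F] [Fintype F] (hcard : Fintype.card F = 2 ^ n)
    (c : F) :
    {v : F | (∑ i ∈ Finset.range n, ((v⁻¹) ^ s) ^ 2 ^ i) = 1 ∧
      (v + 1) ^ (q + 1) + c * v = 0}.Subsingleton := by
  have h2 : (2 : F) = 0 := by
    have h := FiniteField.cast_card_eq_zero F
    rw [hcard] at h
    push_cast at h
    exact pow_eq_zero_iff hn.ne' |>.1 h
  have : CharP F 2 := CharTwo.of_one_ne_zero_of_two_eq_zero one_ne_zero h2
  have hq1 : q - 1 + 1 = q := by
    have := Nat.one_le_two_pow (n := k)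
    omega
  have hinv : ∀ x : F, x ≠ 0 → x ^ ((q - 1) * s) = x := by
    intro x hx
    have h1 : x ^ (2 ^ n - 1) = 1 := by
      rw [← hcard]; exact FiniteField.pow_card_sub_one_eq_one x hx
    have h3 : (q - 1) * s ≡ 1 [MOD orderOf x] :=
      hs.of_dvd (orderOf_dvd_of_pow_eq_one h1)
    have h4 : (q - 1) * s % orderOf x = 1 % orderOf x := h3
    rw [← pow_mod_orderOf x ((q - 1) * s), h4, pow_mod_orderOf, pow_one]
  have hadd : ∀ x y : F, (x + y) ^ q = x ^ q + y ^ q := by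
    intro x y; rw [hq]; exact add_pow_char_pow x y 2 k
  have hT2 : ∀ x : F, (∑ i ∈ Finset.range n, (x ^ 2) ^ 2 ^ i)
      = ∑ i ∈ Finset.range n, x ^ 2 ^ i := by
    intro x
    have e1 := Finset.sum_range_succ (fun i => x ^ 2 ^ i) n
    have e2 := Finset.sum_range_succ' (fun i => x ^ 2 ^ i) n
    have e3 : x ^ 2 ^ n = x := by rw [← hcard]; exact FiniteField.pow_card x
    simp only [e3, pow_zero, pow_one] at e1 e2
    rw [e1] at e2
    rw [add_right_cancel e2]
    refine Finset.sum_congr rfl fun i _ => ?_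
    rw [← pow_mul, pow_succ']
  have hTq : ∀ (m : ℕ) (x : F), (∑ i ∈ Finset.range n, (x ^ 2 ^ m) ^ 2 ^ i)
      = ∑ i ∈ Finset.range n, x ^ 2 ^ i := by
    intro m
    induction m with
    | zero => intro x; simp
    | succ m ih =>
      intro x
      rw [pow_succ, pow_mul, hT2, ih]
  have hT0 : ∀ r : F, (∑ i ∈ Finset.range n, (r ^ q + r) ^ 2 ^ i) = 0 := by
    intro r
    simp only [add_pow_char_pow]
    rw [Finset.sum_add_distrib, hq, hTq]
    exact CharTwo.add_self_eq_zero _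
  have hz : ∀ y : F, y ≠ 0 → (y ^ s) ^ q = y * y ^ s := by
    intro y hy
    rw [← hq1, pow_succ, ← pow_mul, mul_comm s, hinv y hy]
  have hvne : ∀ v : F, (v + 1) ^ (q + 1) + c * v = 0 → v ≠ 0 := by
    rintro v hv rfl
    simp at hv
  have hc0 : c = 0 → ∀ v : F, (v + 1) ^ (q + 1) + c * v = 0 → v + 1 = 0 := by
    intro hc v hv
    rw [hc, zero_mul, add_zero] at hv
    exact pow_eq_zero_iff (Nat.succ_ne_zero _) |>.1 hv
  rintro v ⟨htr, hv⟩ w ⟨-, hw⟩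
  by_contra hne
  have hv0 := hvne v hv
  have hw0 := hvne w hw
  have hc : c ≠ 0 := fun hc => hne (add_right_cancel ((hc0 hc v hv).trans (hc0 hc w hw).symm))
  have hy0 : ∀ u : F, u ≠ 0 → (u + 1) ^ (q + 1) + c * u = 0 → u + 1 ≠ 0 := by
    intro u hu0 hu h
    rw [h, zero_pow (Nat.succ_ne_zero _), zero_add] at hu
    exact mul_ne_zero hc hu0 hu
  have hyv := hy0 v hv0 hv
  have hyw := hy0 w hw0 hw
  have hpow : ∀ u : F, u + 1 ≠ 0 → (u + 1) ^ (q + 1) + c * u = 0 →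
      (u + 1) ^ q = c * u / (u + 1) := by
    intro u hu0 hu
    rw [eq_div_iff hu0, ← pow_succ]
    exact CharTwo.add_eq_zero.1 hu
  have hpv := hpow v hyv hv
  have hpw := hpow w hyw hw
  have hvw : v + w ≠ 0 := fun h => hne (CharTwo.add_eq_zero.1 h)
  set r : F := (w + 1) ^ s / (v + 1) ^ s with hr
  have hr0 : r ≠ 0 := div_ne_zero (pow_ne_zero _ hyw) (pow_ne_zero _ hyv)
  have hrq : r ^ q = (w + 1) / (v + 1) * r := by
    rw [hr, div_pow, hz _ hyv, hz _ hyw, mul_div_mul_comm]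
  have hR : r ^ q + r = r * (v + w) / (v + 1) := by
    rw [hrq]
    field_simp
    linear_combination h2
  have hR0 : r ^ q + r ≠ 0 := by
    rw [hR]; exact div_ne_zero (mul_ne_zero hr0 hvw) hyv
  have hvwq : (v + w) ^ q = c * (v + w) / ((v + 1) * (w + 1)) := by
    have : v + w = (v + 1) + (w + 1) := by linear_combination -h2
    rw [this, hadd, hpv, hpw, ← this]
    field_simp
    linear_combination (v * w) * h2
  have hRq : (r ^ q + r) ^ q = (r ^ q + r) * v⁻¹ := by
    rw [hR, div_pow, mul_pow, hrq, hvwq, hpv]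
    field_simp
  have hRq1 : (r ^ q + r) ^ (q - 1) = v⁻¹ := by
    apply mul_left_cancel₀ hR0
    rw [← pow_succ', hq1, hRq]
  have ht : (v⁻¹) ^ s = r ^ q + r := by
    rw [← hRq1, ← pow_mul, hinv _ hR0]
  rw [ht, hT0] at htr
  exact zero_ne_one htr
end
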